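/- Let X be a finite symmetric subset of D^k, let j be a positive integer, and let f : X → ℂ be a symmetric function, i.e. f(τ∘x) = f(x) for all x ∈ X and τ ∈ S_k (so that f induces a well-defined value f(M) on each multiset M ∈ M(X)). Then k!·Σ_{M ∈ M_j(X)} f(M) = Σ_{τ ∈ S_k} w_j(τ)·Σ_{x ∈ X_τ} f(x). -/

import Mathlib

/-- The multiset `[x_1, …, x_k]` associated to a tuple `(x_1, …, x_k)`. -/
def msetOf {D : Type*} {k : ℕ} (x : Fin k → D) : Multiset D :=
  (List.ofFn x : Multiset D)

/-- The cycle lengths of a permutation of `Fin k`, with fixed points counted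
as cycles of length 1. -/
def fullCycleType {k : ℕ} (τ : Equiv.Perm (Fin k)) : Multiset ℕ :=
  τ.cycleType + Multiset.replicate (k - τ.support.card) 1

/-- The weight `w_j(τ) = ∏_i (1 - (j+1)·[(j+1) ∣ ℓ_i])` over the cycle lengths
`ℓ_i` of `τ`. -/
def wj {k : ℕ} (j : ℕ) (τ : Equiv.Perm (Fin k)) : ℤ :=
  ((fullCycleType τ).map fun ℓ =>
    1 - ((j : ℤ) + 1) * (if (j + 1) ∣ ℓ then 1 else 0)).prod

/-- `M(X)`: the set of `k`-multisets `[x_1,…,x_k]` for `(x_1,…,x_k) ∈ X`. -/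
def MX {D : Type*} [DecidableEq D] {k : ℕ} (X : Finset (Fin k → D)) : Finset (Multiset D) :=
  X.image msetOf

/-- `M_j(X)`: multisets in `M(X)` in which every element has multiplicity at most `j`. -/
def Mj {D : Type*} [DecidableEq D] {k : ℕ} (j : ℕ) (X : Finset (Fin k → D)) :
    Finset (Multiset D) :=
  (MX X).filter fun m => ∀ a ∈ m, m.count a ≤ j

open Finset Equiv

/-- The signs of the permutations preserving `y` sum to zero, unless `y` is injective. -/
theorem Equiv.Perm.sum_sign_filter_comp_eq {α β : Type*} [Fintype α] [DecidableEq α]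
    [DecidableEq β] (y : α → β) [Decidable (Function.Injective y)] :
    ∑ τ ∈ univ.filter fun τ : Perm α => y ∘ τ = y, (Perm.sign τ : ℤ) =
      if Function.Injective y then 1 else 0 := by
  split_ifs with h
  · rw [Finset.sum_eq_single 1]
    · simp
    · intro τ hτ hne
      exact absurd (Equiv.ext fun i => h (congrFun (Finset.mem_filter.1 hτ).2 i) : τ = 1) hne
    · simp
  · simp only [Function.Injective, not_forall] at h
    obtain ⟨a, b, hab, hne⟩ := h
    have hy : y ∘ swap a b = y := by
      ext i
      by_cases hi : i = a
      · simp [hi, hab]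
      · by_cases hi' : i = b
        · simp [hi', hab]
        · simp [swap_apply_of_ne_of_ne hi hi']
    refine Finset.sum_involution (fun τ _ => swap a b * τ) ?_ ?_ ?_ ?_
    · intro τ _
      simp [Perm.sign_swap hne]
    · intro τ _ _ h
      exact hne (swap_eq_one_iff.1 (mul_eq_right.1 h))
    · intro τ hτ
      simp only [Finset.mem_filter, Finset.mem_univ, true_and] at hτ ⊢
      rw [Perm.coe_mul, ← Function.comp_assoc, hy, hτ]
    · intro τ _
      simp [← mul_assoc]

theorem sum_injective_prod_eq_factorial_mul {α Z R : Type*} [Fintype α] [DecidableEq α]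
    [Fintype Z] [DecidableEq Z] [CommRing R] (z : Z → R) :
    ∑ c : α → Z with Function.Injective c, ∏ i, z (c i) =
      (Fintype.card α).factorial *
        ∑ t ∈ (univ : Finset Z).powersetCard (Fintype.card α), ∏ a ∈ t, z a := by
  rw [← Finset.sum_fiberwise_of_maps_to (g := fun c : α → Z => univ.image c)
    (t := (univ : Finset Z).powersetCard (Fintype.card α)), Finset.mul_sum]
  · refine Finset.sum_congr rfl fun t ht => ?_
    have hcard : #t = Fintype.card α := (Finset.mem_powersetCard.1 ht).2
    rw [Finset.sum_congr rfl (g := fun _ => ∏ a ∈ t, z a), Finset.sum_const, nsmul_eq_mul]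
    · congr 2
      have e : α ≃ t := Fintype.equivOfCardEq (by simp [hcard])
      rw [← Fintype.card_equiv e, ← Finset.card_univ]
      symm
      refine Finset.card_bij (fun e _ i => (e i : Z)) ?_ ?_ ?_
      · intro e _
        simp only [Finset.mem_filter, Finset.mem_univ, true_and]
        refine ⟨Subtype.val_injective.comp e.injective, ?_⟩
        ext a
        simp only [Finset.mem_image, Finset.mem_univ, true_and]
        exact ⟨fun ⟨i, hi⟩ => hi ▸ (e i).2, fun ha => ⟨e.symm ⟨a, ha⟩, by simp⟩⟩
      · intro e _ e' _ h
        exact Equiv.ext fun i => Subtype.ext (congrFun h i)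
      · intro c hc
        simp only [Finset.mem_filter, Finset.mem_univ, true_and] at hc
        have hmem : ∀ i, c i ∈ t := fun i => hc.2 ▸ Finset.mem_image_of_mem c (mem_univ i)
        refine ⟨Equiv.ofBijective (fun i => (⟨c i, hmem i⟩ : t)) ⟨?_, ?_⟩, mem_univ _, rfl⟩
        · exact fun i i' h => hc.1 (congrArg Subtype.val h)
        · rintro ⟨a, ha⟩
          rw [← hc.2] at ha
          obtain ⟨i, -, hi⟩ := Finset.mem_image.1 ha
          exact ⟨i, Subtype.ext hi⟩
    · intro c hc
      simp only [Finset.mem_filter, Finset.mem_univ, true_and] at hc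
      rw [← hc.2, Finset.prod_image hc.1.injOn]
  · intro c hc
    simp only [Finset.mem_filter, Finset.mem_univ, true_and] at hc
    simp [Finset.mem_powersetCard, Finset.card_image_of_injective _ hc]

theorem IsPrimitiveRoot.sum_fin_pow_succ_pow {R : Type*} [CommRing R] [IsDomain R]
    {ω : R} {j : ℕ} (hω : IsPrimitiveRoot ω (j + 1)) (ℓ : ℕ) :
    ∑ i : Fin j, (ω ^ (i.val + 1)) ^ ℓ =
      ((j : R) + 1) * (if (j + 1) ∣ ℓ then 1 else 0) - 1 := by
  have hsum : ∑ i ∈ range (j + 1), (ω ^ ℓ) ^ i =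
      ((j : R) + 1) * (if (j + 1) ∣ ℓ then 1 else 0) := by
    split_ifs with h
    · simp [(hω.pow_eq_one_iff_dvd ℓ).2 h]
    · have hne : ω ^ ℓ - 1 ≠ 0 := fun h0 =>
        h ((hω.pow_eq_one_iff_dvd ℓ).1 (sub_eq_zero.1 h0))
      rw [mul_zero]
      refine (mul_eq_zero.1 ?_).resolve_right hne
      rw [geom_sum_mul, ← pow_mul, mul_comm, pow_mul, hω.pow_eq_one, one_pow, sub_self]
  rw [← hsum, Finset.sum_range_succ', pow_zero, add_sub_cancel_right,
    Fin.sum_univ_eq_sum_range (fun i => (ω ^ (i + 1)) ^ ℓ)]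
  exact Finset.sum_congr rfl fun i _ => by rw [← pow_mul, ← pow_mul, mul_comm]

open Polynomial in
theorem IsPrimitiveRoot.prod_fin_X_sub_C_pow_succ {R : Type*} [CommRing R] [IsDomain R]
    {ω : R} {j : ℕ} (hω : IsPrimitiveRoot ω (j + 1)) :
    ∏ i : Fin j, (X + C (-ω ^ (i.val + 1))) = ∑ i ∈ range (j + 1), (X : R[X]) ^ i := by
  have hX : (X - 1 : R[X]) ≠ 0 := by simpa using X_sub_C_ne_zero (1 : R)
  refine mul_right_cancel₀ hX ?_
  rw [geom_sum_mul, X_pow_sub_one_eq_prod j.succ_pos hω]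
  classical
  have hinj : Set.InjOn (fun i => ω ^ i) (range (j + 1) : Set ℕ) := fun a ha b hb h =>
    hω.pow_inj (by simpa using ha) (by simpa using hb) h
  have hroots : nthRootsFinset (j + 1) (1 : R) = (range (j + 1)).image (fun i => ω ^ i) := by
    symm
    refine Finset.eq_of_subset_of_card_le ?_ ?_
    · intro a ha
      obtain ⟨i, -, rfl⟩ := Finset.mem_image.1 ha
      rw [Polynomial.mem_nthRootsFinset j.succ_pos, ← pow_mul, mul_comm, pow_mul, hω.pow_eq_one,
        one_pow]
    · rw [hω.card_nthRootsFinset, Finset.card_image_of_injOn hinj, card_range]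
  rw [hroots, Finset.prod_image hinj, Finset.prod_range_succ',
    Fin.prod_univ_eq_prod_range (fun i => X + C (-ω ^ (i + 1)))]
  simp [sub_eq_add_neg]

theorem IsPrimitiveRoot.sum_injective_prod {R : Type*} [CommRing R] [IsDomain R]
    {ω : R} {j : ℕ} (hω : IsPrimitiveRoot ω (j + 1)) (α : Type*) [Fintype α] [DecidableEq α] :
    (-1) ^ Fintype.card α *
      ∑ c : α → Fin j with Function.Injective c, ∏ i, ω ^ ((c i).val + 1) =
      if Fintype.card α ≤ j then ((Fintype.card α).factorial : R) else 0 := by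
  rw [sum_injective_prod_eq_factorial_mul (fun a : Fin j => ω ^ (a.val + 1))]
  split_ifs with h
  · have key := Finset.prod_X_add_C_coeff (univ : Finset (Fin j))
      (fun i => -ω ^ (i.val + 1)) (k := j - Fintype.card α) (by simp)
    rw [hω.prod_fin_X_sub_C_pow_succ] at key
    simp only [Finset.card_univ, Fintype.card_fin, Nat.sub_sub_self h] at key
    have hcoeff : (∑ i ∈ range (j + 1), (Polynomial.X : Polynomial R) ^ i).coeff
        (j - Fintype.card α) = 1 := by
      simp [Polynomial.coeff_X_pow]
    rw [hcoeff] at key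
    rw [mul_left_comm, Finset.mul_sum]
    rw [Finset.sum_congr rfl, ← key, mul_one]
    intro t ht
    rw [← (Finset.mem_powersetCard.1 ht).2, Finset.prod_neg]
  · rw [Finset.powersetCard_eq_empty.2 (by simpa using h)]
    simp

/-- A product over the orbits of `τ`, expressed through the cycle type of `τ`. -/
theorem Equiv.Perm.prod_quotient_sameCycle {α M : Type*} [Fintype α] [DecidableEq α]
    [CommMonoid M] (τ : Perm α) [Fintype (Quotient (Perm.SameCycle.setoid τ))]
    [DecidableEq (Quotient (Perm.SameCycle.setoid τ))] (F : ℕ → M) :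
    ∏ q : Quotient (Perm.SameCycle.setoid τ),
        F #{a : α | Quotient.mk (Perm.SameCycle.setoid τ) a = q} =
      (τ.cycleType.map F).prod * F 1 ^ (Fintype.card α - #τ.support) := by
  classical
  have hfiber (a b : α) : Quotient.mk (Perm.SameCycle.setoid τ) b = Quotient.mk _ a ↔
      τ.SameCycle a b := by
    rw [Quotient.eq]
    exact Perm.sameCycle_comm
  have hsupp : univ = τ.support.image (Quotient.mk (Perm.SameCycle.setoid τ)) ∪
      τ.supportᶜ.image (Quotient.mk (Perm.SameCycle.setoid τ)) := by
    rw [← Finset.image_union, Finset.union_compl,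
      Finset.image_univ_of_surjective Quotient.mk_surjective]
  have hdisj : _root_.Disjoint (τ.support.image (Quotient.mk (Perm.SameCycle.setoid τ)))
      (τ.supportᶜ.image (Quotient.mk (Perm.SameCycle.setoid τ))) := by
    rw [Finset.disjoint_left]
    intro q hq hq'
    obtain ⟨a, ha, rfl⟩ := Finset.mem_image.1 hq
    obtain ⟨b, hb, hba⟩ := Finset.mem_image.1 hq'
    rw [hfiber] at hba
    rw [Finset.mem_compl, Perm.notMem_support] at hb
    rw [Perm.mem_support] at ha
    exact ha (hba.apply_eq_self_iff.2 hb)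
  rw [hsupp, Finset.prod_union hdisj]
  congr 1
  · rw [Perm.cycleType_def, Multiset.map_map]
    change _ = ∏ σ ∈ τ.cycleFactorsFinset, F #σ.support
    symm
    refine Finset.prod_bij' (s := τ.cycleFactorsFinset)
      (fun σ hσ => Quotient.mk _ (Perm.mem_cycleFactorsFinset_iff.1 hσ).1.nonempty_support.choose)
      (fun q _ => Quotient.lift (s := Perm.SameCycle.setoid τ) (fun a => τ.cycleOf a)
        (fun a b h => Perm.SameCycle.cycleOf_eq h) q) ?_ ?_ ?_ ?_ ?_
    · intro σ hσ
      exact Finset.mem_image_of_mem _ (Perm.mem_cycleFactorsFinset_support_le hσ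
        (Perm.mem_cycleFactorsFinset_iff.1 hσ).1.nonempty_support.choose_spec)
    · intro q hq
      obtain ⟨a, ha, rfl⟩ := Finset.mem_image.1 hq
      exact Perm.cycleOf_mem_cycleFactorsFinset_iff.2 ha
    · intro σ hσ
      exact (Perm.cycle_is_cycleOf
        (Perm.mem_cycleFactorsFinset_iff.1 hσ).1.nonempty_support.choose_spec hσ).symm
    · intro q hq
      obtain ⟨a, ha, rfl⟩ := Finset.mem_image.1 hq
      rw [hfiber]
      have hσ := Perm.cycleOf_mem_cycleFactorsFinset_iff.2 ha
      exact (Perm.mem_support_cycleOf_iff.1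
        (Perm.mem_cycleFactorsFinset_iff.1 hσ).1.nonempty_support.choose_spec).1
    · intro σ hσ
      have hs := (Perm.mem_cycleFactorsFinset_iff.1 hσ).1.nonempty_support.choose_spec
      congr 2
      ext b
      simp only [Finset.mem_filter, Finset.mem_univ, true_and, hfiber]
      conv_lhs => rw [Perm.cycle_is_cycleOf hs hσ]
      rw [Perm.mem_support_cycleOf_iff, and_iff_left (Perm.mem_cycleFactorsFinset_support_le hσ hs)]
  · have hfix {a b : α} (ha : a ∉ τ.support) : τ.SameCycle a b ↔ b = a := by
      rw [Perm.notMem_support] at ha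
      refine ⟨fun h => (h.eq_of_left ha).symm, ?_⟩
      rintro rfl
      exact Perm.SameCycle.refl _ _
    rw [Finset.prod_image, ← Finset.card_compl, ← Finset.prod_const]
    · refine Finset.prod_congr rfl fun a ha => ?_
      congr 1
      rw [Finset.card_eq_one]
      refine ⟨a, ?_⟩
      ext b
      simp [hfiber, hfix (Finset.mem_compl.1 ha)]
    · intro a ha b hb h
      exact (hfix (by simpa using hb)).1 ((hfiber b a).1 h)

/-- The weighted count of the colorings fixed by `τ` is a product of power sums over its cycles. -/
theorem Equiv.Perm.sum_prod_filter_comp_eq {α Z R : Type*} [Fintype α] [DecidableEq α]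
    [Fintype Z] [DecidableEq Z] [CommRing R] (z : Z → R) (τ : Perm α) :
    ∑ c : α → Z with c ∘ τ = c, ∏ i, z (c i) =
      (τ.cycleType.map fun ℓ => ∑ a, z a ^ ℓ).prod *
        (∑ a, z a ^ 1) ^ (Fintype.card α - #τ.support) := by
  classical
  rw [← Perm.prod_quotient_sameCycle τ fun ℓ => ∑ a, z a ^ ℓ, Fintype.prod_sum]
  symm
  refine Finset.sum_bij (fun d _ a => d (Quotient.mk _ a)) ?_ ?_ ?_ ?_
  · intro d _
    simp only [Finset.mem_filter, Finset.mem_univ, true_and]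
    ext a
    exact congrArg d (Quotient.sound (s := Perm.SameCycle.setoid τ)
      (Perm.sameCycle_apply_left.2 (Perm.SameCycle.refl τ a)))
  · intro d _ d' _ h
    ext q
    induction q using Quotient.inductionOn with
    | h a => exact congrFun h a
  · intro c hc
    have hc : ∀ a, c (τ a) = c a := congrFun (Finset.mem_filter.1 hc).2
    have hz : ∀ (n : ℕ) (a : α), c ((τ ^ n) a) = c a := by
      intro n
      induction n with
      | zero => simp
      | succ n ih => intro a; rw [pow_succ, Perm.mul_apply, ih, hc]
    refine ⟨Quotient.lift c ?_, mem_univ _, rfl⟩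
    intro a b h
    obtain ⟨n, -, rfl⟩ := Perm.SameCycle.exists_pow_eq' h
    exact (hz n a).symm
  · intro d _
    rw [← Finset.prod_fiberwise univ (fun a => Quotient.mk (Perm.SameCycle.setoid τ) a)]
    refine Finset.prod_congr rfl fun q _ => ?_
    rw [← Finset.prod_const]
    refine Finset.prod_congr rfl fun a ha => ?_
    exact congrArg (fun q => z (d q)) (Finset.mem_filter.1 ha).2.symm

/-- Since `1 - (j+1)·[(j+1) ∣ ℓ]` is minus the `ℓ`-th power sum of the nontrivial `(j+1)`-st roots of
unity, `wj` is a signed count of colorings by these roots that are constant on cycles. -/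
theorem wj_eq_sum_colorings {k j : ℕ} {ω : ℂ} (hω : IsPrimitiveRoot ω (j + 1))
    (τ : Perm (Fin k)) :
    (wj j τ : ℂ) = (-1) ^ k * ((Perm.sign τ : ℤ) : ℂ) *
      ∑ c : Fin k → Fin j with c ∘ τ = c, ∏ i, ω ^ ((c i).val + 1) := by
  have hle : #τ.support ≤ k := by simpa using Finset.card_le_univ τ.support
  have hcard : Multiset.card (fullCycleType τ) =
      Multiset.card τ.cycleType + (k - #τ.support) := by simp [fullCycleType]
  have hsign : ((Perm.sign τ : ℤ) : ℂ) =
      (-1) ^ (#τ.support + Multiset.card τ.cycleType) := by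
    rw [Perm.sign_of_cycleType, Perm.sum_cycleType]
    simp
  have hw : (wj j τ : ℂ) = ((fullCycleType τ).map fun ℓ =>
      -∑ a : Fin j, (ω ^ (a.val + 1)) ^ ℓ).prod := by
    rw [wj]
    refine (map_multiset_prod (Int.castRingHom ℂ) _).trans ?_
    rw [Multiset.map_map]
    congr 1
    refine Multiset.map_congr rfl fun ℓ _ => ?_
    rw [hω.sum_fin_pow_succ_pow]
    simp
  have hpow : (-1 : ℂ) ^ (Multiset.card τ.cycleType + (k - #τ.support)) =
      (-1) ^ k * (-1) ^ (#τ.support + Multiset.card τ.cycleType) := by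
    rw [← pow_add, neg_one_pow_eq_pow_mod_two, neg_one_pow_eq_pow_mod_two (n := k + _)]
    congr 1
    omega
  rw [hw, Perm.sum_prod_filter_comp_eq (fun a : Fin j => ω ^ (a.val + 1)), hsign, ← hpow, ← hcard,
    ← Multiset.card_map (fun ℓ => ∑ a : Fin j, (ω ^ (a.val + 1)) ^ ℓ), Fintype.card_fin]
  have hneg := Multiset.prod_map_neg
    ((fullCycleType τ).map fun ℓ => ∑ a : Fin j, (ω ^ (a.val + 1)) ^ ℓ)
  rw [Multiset.map_map] at hneg
  refine hneg.trans ?_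
  congr 1
  simp [fullCycleType]

theorem sum_separating_colorings {α ι Z R : Type*} [Fintype α] [DecidableEq α] [Fintype ι]
    [DecidableEq ι] [Fintype Z] [DecidableEq Z] [CommRing R] (φ : α → ι) (z : Z → R) :
    ∑ c : α → Z with Function.Injective (fun a => (φ a, c a)), ∏ a, z (c a) =
      ∏ i, ∑ d : {a // φ a = i} → Z with Function.Injective d, ∏ a, z (d a) := by
  rw [Finset.prod_univ_sum]
  symm
  refine Finset.sum_bij (fun d _ a => d (φ a) ⟨a, rfl⟩) ?_ ?_ ?_ ?_
  · intro d hd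
    simp only [Fintype.mem_piFinset, Finset.mem_filter, Finset.mem_univ, true_and] at hd ⊢
    intro a b h
    obtain ⟨h, h'⟩ := Prod.mk.inj h
    have hb (i : ι) (hi : φ b = i) : d (φ b) ⟨b, rfl⟩ = d i ⟨b, hi⟩ := by
      subst hi
      rfl
    exact congrArg Subtype.val (hd _ (h'.trans (hb _ h.symm)))
  · intro d _ d' _ h
    ext i ⟨a, rfl⟩
    exact congrFun h a
  · intro c hc
    simp only [Finset.mem_filter, Finset.mem_univ, true_and] at hc
    refine ⟨fun i a => c a, ?_, rfl⟩
    simp only [Fintype.mem_piFinset, Finset.mem_filter, Finset.mem_univ, true_and]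
    rintro i ⟨a, ha⟩ ⟨b, hb⟩ h
    exact Subtype.ext (hc (Prod.ext (ha.trans hb.symm) h))
  · intro d _
    rw [← Fintype.prod_fiberwise φ (fun a => z (d (φ a) ⟨a, rfl⟩))]
    refine Finset.prod_congr rfl fun i _ => Finset.prod_congr rfl ?_
    rintro ⟨a, rfl⟩ _
    rfl

theorem sum_stabilizer_wj_of_fintype {ι : Type*} [Fintype ι] [DecidableEq ι] {k : ℕ} (j : ℕ)
    (φ : Fin k → ι) :
    ∑ τ ∈ univ.filter (fun τ : Perm (Fin k) => φ ∘ τ = φ), (wj j τ : ℂ) =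
      if ∀ i, Fintype.card {a // φ a = i} ≤ j then
        (#(univ.filter fun τ : Perm (Fin k) => φ ∘ τ = φ) : ℂ) else 0 := by
  classical
  have hω := Complex.isPrimitiveRoot_exp (j + 1) j.succ_ne_zero
  set ω := Complex.exp (2 * Real.pi * Complex.I / ((j + 1 : ℕ) : ℂ))
  have hcard : #(univ.filter fun τ : Perm (Fin k) => φ ∘ τ = φ) =
      ∏ i, (Fintype.card {a // φ a = i}).factorial := by
    rw [← DomMulAct.stabilizer_card, Fintype.card_subtype]
  have hk : ∑ i, Fintype.card {a // φ a = i} = k := by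
    rw [← Fintype.card_sigma, Fintype.card_congr (Equiv.sigmaFiberEquiv φ), Fintype.card_fin]
  calc ∑ τ ∈ univ.filter (fun τ : Perm (Fin k) => φ ∘ τ = φ), (wj j τ : ℂ)
      = (-1) ^ k * ∑ c : Fin k → Fin j, (∏ i, ω ^ ((c i).val + 1)) *
          ((∑ τ ∈ univ.filter
            (fun τ : Perm (Fin k) => (fun a => (φ a, c a)) ∘ τ = fun a => (φ a, c a)),
            (Perm.sign τ : ℤ) : ℤ) : ℂ) := by
        push_cast
        simp only [wj_eq_sum_colorings hω, Finset.mul_sum]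
        rw [Finset.sum_comm' (t' := univ) (s' := fun c => univ.filter
          fun τ : Perm (Fin k) => (fun a => (φ a, c a)) ∘ τ = fun a => (φ a, c a))]
        · exact Finset.sum_congr rfl fun c _ => Finset.sum_congr rfl fun τ _ => by ring
        · intro τ c
          simp [funext_iff, forall_and]
    _ = (-1) ^ k * ∑ c : Fin k → Fin j with Function.Injective (fun a => (φ a, c a)),
          ∏ i, ω ^ ((c i).val + 1) := by
        rw [Finset.sum_filter]
        congr 1
        refine Finset.sum_congr rfl fun c _ => ?_
        rw [Perm.sum_sign_filter_comp_eq]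
        split_ifs <;> simp
    _ = ∏ i, (if Fintype.card {a // φ a = i} ≤ j then
          ((Fintype.card {a // φ a = i}).factorial : ℂ) else 0) := by
        rw [sum_separating_colorings φ (fun a : Fin j => ω ^ (a.val + 1))]
        have hsign : (-1 : ℂ) ^ k = ∏ i, (-1) ^ Fintype.card {a // φ a = i} := by
          rw [Finset.prod_pow_eq_pow_sum, hk]
        rw [hsign, ← Finset.prod_mul_distrib]
        exact Finset.prod_congr rfl fun i _ => hω.sum_injective_prod _
    _ = _ := by
        split_ifs with h
        · rw [hcard]
          push_cast
          exact Finset.prod_congr rfl fun i _ => if_pos (h i)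
        · push Not at h
          obtain ⟨i, hi⟩ := h
          exact Finset.prod_eq_zero (mem_univ i) (if_neg hi.not_ge)

theorem count_msetOf {D : Type*} [DecidableEq D] {k : ℕ} (x : Fin k → D) (a : D) :
    (msetOf x).count a = Fintype.card {i // x i = a} := by
  rw [msetOf, ← Fin.univ_val_map, Multiset.count_map, Fintype.card_subtype]
  simp only [eq_comm (a := a)]
  rfl

/-- The weights of the permutations fixing `x` sum to the order of the stabilizer of `x` if every
multiplicity in `x` is at most `j`, and to zero otherwise. -/
theorem sum_stabilizer_wj {D : Type*} [DecidableEq D] {k : ℕ} (j : ℕ) (x : Fin k → D) :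
    ∑ τ ∈ univ.filter (fun τ : Perm (Fin k) => x ∘ τ = x), (wj j τ : ℂ) =
      if ∀ a ∈ msetOf x, (msetOf x).count a ≤ j then
        (#(univ.filter fun τ : Perm (Fin k) => x ∘ τ = x) : ℂ) else 0 := by
  set φ : Fin k → {a // a ∈ univ.image x} :=
    fun i => ⟨x i, Finset.mem_image_of_mem x (mem_univ i)⟩ with hφ
  have hcomp (τ : Perm (Fin k)) : φ ∘ τ = φ ↔ x ∘ τ = x := by
    simp [funext_iff, hφ]
  have hmem (a : D) : a ∈ msetOf x ↔ a ∈ univ.image x := by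
    simp [msetOf, List.mem_ofFn]
  have h := sum_stabilizer_wj_of_fintype j φ
  simp only [hcomp] at h
  rw [h]
  congr 1
  simp only [hmem, count_msetOf, Subtype.forall, hφ, Subtype.mk.injEq]

theorem msetOf_comp_perm {D : Type*} {k : ℕ} (x : Fin k → D) (τ : Perm (Fin k)) :
    msetOf (x ∘ τ) = msetOf x :=
  Multiset.coe_eq_coe.2 (τ.ofFn_comp_perm x)

theorem msetOf_eq_msetOf_iff {D : Type*} [DecidableEq D] {k : ℕ} {x y : Fin k → D} :
    msetOf y = msetOf x ↔ ∃ τ : Perm (Fin k), x ∘ τ = y := by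
  refine ⟨fun h => ?_, ?_⟩
  · have e (a : D) : {i // y i = a} ≃ {i // x i = a} :=
      Fintype.equivOfCardEq (by rw [← count_msetOf, ← count_msetOf, h])
    refine ⟨(sigmaFiberEquiv y).symm.trans ((sigmaCongrRight e).trans (sigmaFiberEquiv x)), ?_⟩
    ext i
    exact (e (y i) ⟨i, rfl⟩).2
  · rintro ⟨τ, rfl⟩
    exact msetOf_comp_perm x τ

theorem card_filter_comp_eq_of_comp_eq {D : Type*} [DecidableEq D] {k : ℕ} {x y : Fin k → D}
    (h : ∃ τ : Perm (Fin k), x ∘ τ = y) :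
    #(univ.filter fun τ : Perm (Fin k) => y ∘ τ = y) =
      #(univ.filter fun τ : Perm (Fin k) => x ∘ τ = y) := by
  obtain ⟨σ, rfl⟩ := h
  refine Finset.card_equiv (Equiv.mulLeft σ) fun τ => ?_
  simp [Function.comp_assoc]

theorem sum_card_stabilizer_filter_msetOf {D : Type*} [DecidableEq D] {k : ℕ}
    (X : Finset (Fin k → D)) (hX : ∀ x ∈ X, ∀ τ : Perm (Fin k), x ∘ τ ∈ X)
    {x : Fin k → D} (hx : x ∈ X) :
    ∑ y ∈ X.filter (fun y => msetOf y = msetOf x),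
      #(univ.filter fun τ : Perm (Fin k) => y ∘ τ = y) = k.factorial := by
  rw [Finset.sum_congr rfl fun y hy => card_filter_comp_eq_of_comp_eq
      (msetOf_eq_msetOf_iff.1 (Finset.mem_filter.1 hy).2),
    ← Finset.card_eq_sum_card_fiberwise, Finset.card_univ, Fintype.card_perm, Fintype.card_fin]
  intro τ _
  simp [hX x hx τ, msetOf_comp_perm]

/-- **Weighted multiset sieve.**  If `X ⊆ D^k` is finite and symmetric, `j ≥ 1`, and
`f : X → ℂ` is symmetric (hence induces a well-defined value `g M` on each multiset
`M ∈ M(X)`), then `k!·Σ_{M ∈ M_j(X)} f(M) = Σ_{τ ∈ S_k} w_j(τ)·Σ_{x ∈ X_τ} f(x)`. -/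
theorem weighted_multiset_sieve_mult_le {D : Type*} [DecidableEq D] (k j : ℕ)
    (hk : 0 < k) (hj : 0 < j) (X : Finset (Fin k → D))
    (hX : ∀ x ∈ X, ∀ τ : Equiv.Perm (Fin k), x ∘ τ ∈ X)
    (f : (Fin k → D) → ℂ)
    (hf : ∀ x ∈ X, ∀ τ : Equiv.Perm (Fin k), f (x ∘ τ) = f x)
    (g : Multiset D → ℂ)
    (hg : ∀ x ∈ X, g (msetOf x) = f x) :
    (Nat.factorial k : ℂ) * ∑ m ∈ Mj j X, g m =
      ∑ τ : Equiv.Perm (Fin k), (wj j τ : ℂ) *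
        ∑ x ∈ X.filter fun x => x ∘ τ = x, f x := by
  calc (Nat.factorial k : ℂ) * ∑ m ∈ Mj j X, g m
      = ∑ m ∈ MX X, ∑ x ∈ X with msetOf x = m,
          if ∀ a ∈ msetOf x, (msetOf x).count a ≤ j then
            (#(univ.filter fun τ : Perm (Fin k) => x ∘ τ = x) : ℂ) * f x else 0 := by
        rw [Mj, Finset.sum_filter, Finset.mul_sum]
        refine Finset.sum_congr rfl fun m hm => ?_
        obtain ⟨x, hx, rfl⟩ := Finset.mem_image.1 hm
        have hterm : ∀ y ∈ X.filter (fun y => msetOf y = msetOf x),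
            (if ∀ a ∈ msetOf y, (msetOf y).count a ≤ j then
              (#(univ.filter fun τ : Perm (Fin k) => y ∘ τ = y) : ℂ) * f y else 0) =
            (#(univ.filter fun τ : Perm (Fin k) => y ∘ τ = y) : ℂ) *
              if ∀ a ∈ msetOf x, (msetOf x).count a ≤ j then g (msetOf x) else 0 := by
          intro y hy
          obtain ⟨hyX, hy⟩ := Finset.mem_filter.1 hy
          rw [← hg y hyX, hy, mul_ite, mul_zero]
        rw [Finset.sum_congr rfl hterm, ← Finset.sum_mul, ← Nat.cast_sum,
          sum_card_stabilizer_filter_msetOf X hX hx]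
    _ = ∑ x ∈ X, (∑ τ ∈ univ.filter (fun τ : Perm (Fin k) => x ∘ τ = x),
          (wj j τ : ℂ)) * f x := by
        rw [MX, Finset.sum_fiberwise_of_maps_to fun x hx => Finset.mem_image_of_mem msetOf hx]
        refine Finset.sum_congr rfl fun x _ => ?_
        rw [sum_stabilizer_wj, ite_mul, zero_mul]
    _ = _ := by
        simp only [Finset.sum_mul, Finset.mul_sum, Finset.sum_filter, ite_mul, mul_ite,
          zero_mul, mul_zero]
        exact Finset.sum_comm
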